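/- There exists a finite connected simple graph G with positive edge costs C, a designated source vertex s, a positive demand function d on the remaining vertices, and two spanning trees T₁ and T₂ of G, such that: (i) T₁ has strictly smaller total edge cost than T₂, and indeed T₁ has minimum total edge cost ∑_{e ∈ T} C(e) among all spanning trees T of G; and yet (ii) the quadratic distribution cost of T₂ is strictly smaller than that of T₁, i.e., ∑_{e ∈ T₂} C(e)·x_{T₂}(e)² < ∑_{e ∈ T₁} C(e)·x_{T₁}(e)², where x_T denotes the unique flow on the spanning tree T that delivers d(v) units to every vertex v ≠ s from the source s. Hence a minimum spanning tree need not be an optimal radial configuration for the quadratic distribution cost. -/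

import Mathlib

open scoped Classical

/-- Total edge cost `∑_{e ∈ T} C e` of a subgraph `T`. -/
noncomputable def edgeCostSum {n : ℕ} (C : Sym2 (Fin n) → ℝ)
    (T : SimpleGraph (Fin n)) : ℝ :=
  ∑ e ∈ T.edgeFinset, C e

/-- The unique flow on the spanning tree `T` delivering demand `d v` to each
vertex `v ≠ s` from the source `s`: on an edge `e`, it equals the total demand of
the vertices on the side of `e` away from `s`, i.e. of the vertices not reachable
from `s` once `e` is deleted. -/
noncomputable def treeFlow {n : ℕ} (d : Fin n → ℝ) (s : Fin n)
    (T : SimpleGraph (Fin n)) (e : Sym2 (Fin n)) : ℝ :=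
  ∑ v ∈ Finset.univ.filter (fun v => ¬ (T.deleteEdges {e}).Reachable s v), d v

/-- Quadratic distribution cost `∑_{e ∈ T} C e · x_T(e)²` of a spanning tree `T`. -/
noncomputable def quadCost {n : ℕ} (C : Sym2 (Fin n) → ℝ) (d : Fin n → ℝ)
    (s : Fin n) (T : SimpleGraph (Fin n)) : ℝ :=
  ∑ e ∈ T.edgeFinset, C e * (treeFlow d s T e) ^ 2

/-!
On the complete graph on `n ≥ 3` vertices charge `2` for the edges at the source `s` and `1` for all
others. A spanning tree then costs `n - 1 + deg s`, so it is minimum exactly when `s` is a leaf, as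
in the star centred at any other vertex. But the only edge at a leaf `s` carries the total demand
`D` and already contributes `2 D²`, whereas in the star centred at `s` the demands travel
separately, for a quadratic cost of `2 ∑ d(v)² < 2 D²`.
-/

open Finset SimpleGraph

lemma sum_sq_lt_sq_sum_of_pos {ι R : Type*} [CommSemiring R] [PartialOrder R]
    [IsStrictOrderedRing R] {A : Finset ι} {f : ι → R} (hA : A.Nontrivial)
    (hf : ∀ i ∈ A, 0 < f i) : ∑ i ∈ A, f i ^ 2 < (∑ i ∈ A, f i) ^ 2 := by
  have lt_sum : ∀ i ∈ A, f i < ∑ j ∈ A, f j := fun i hi ↦ by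
    obtain ⟨j, hj, hji⟩ := hA.exists_ne i
    exact single_lt_sum hji hi hj (hf j hj) fun k hk _ ↦ (hf k hk).le
  calc ∑ i ∈ A, f i ^ 2
      = ∑ i ∈ A, f i * f i := by simp only [sq]
    _ < ∑ i ∈ A, f i * ∑ j ∈ A, f j :=
        sum_lt_sum_of_nonempty hA.nonempty fun i hi ↦ mul_lt_mul_of_pos_left (lt_sum i hi) (hf i hi)
    _ = (∑ i ∈ A, f i) ^ 2 := by rw [← sum_mul, sq]

section Graph

variable {V : Type*}

lemma reachable_deleteEdges_iff_of_neighborSet_eq_singleton {G : SimpleGraph V} {s u v : V}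
    (hs : G.neighborSet s = {u}) : (G.deleteEdges {s(s, u)}).Reachable s v ↔ v = s := by
  refine ⟨fun h ↦ ?_, fun h ↦ h ▸ .rfl⟩
  have isolated : (G.deleteEdges {s(s, u)}).neighborSet s = ∅ := by
    ext w
    have : G.Adj s w ↔ w = u := Set.ext_iff.mp hs w
    simp +contextual [this]
  by_contra hne
  exact not_reachable_of_neighborSet_left_eq_empty (Ne.symm hne) isolated h

lemma neighborSet_starGraph_of_ne_center {r v : V} (hv : v ≠ r) :
    (starGraph r).neighborSet v = {r} := by
  ext w
  simp only [mem_neighborSet, starGraph_adj, Set.mem_singleton_iff]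
  grind

lemma reachable_deleteEdges_starGraph_iff {r v w : V} (hv : v ≠ r) :
    ((starGraph r).deleteEdges {s(r, v)}).Reachable r w ↔ w ≠ v := by
  constructor
  · rintro h rfl
    exact isAcyclic_iff_forall_adj_isBridge.mp (isAcyclic_starGraph r)
      (starGraph_center_adj hv.symm) h
  · intro hw
    obtain rfl | hwr := eq_or_ne w r
    · rfl
    · exact Adj.reachable (by simp [hwr, hwr.symm, hw])

lemma edgeFinset_starGraph [Fintype V] [DecidableEq V] (r : V) [Fintype (starGraph r).edgeSet] :
    (starGraph r).edgeFinset = ({r}ᶜ : Finset V).image (s(r, ·)) := by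
  ext e
  induction e with | h x y
  simp only [mem_edgeFinset, mem_edgeSet, starGraph_adj, mem_image, mem_compl, mem_singleton]
  constructor
  · rintro ⟨hne, rfl | rfl⟩
    exacts [⟨y, hne.symm, rfl⟩, ⟨x, hne, Sym2.eq_swap⟩]
  · rintro ⟨v, hv, h⟩
    grind [Sym2.eq_iff]

end Graph

section QuadCost

variable {n : ℕ} {C : Sym2 (Fin n) → ℝ} {d : Fin n → ℝ} {s : Fin n} {T : SimpleGraph (Fin n)}

lemma treeFlow_of_neighborSet_eq_singleton {u : Fin n} (hs : T.neighborSet s = {u}) :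
    treeFlow d s T s(s, u) = ∑ v ∈ {s}ᶜ, d v := by
  simp only [treeFlow, reachable_deleteEdges_iff_of_neighborSet_eq_singleton hs,
    filter_not, filter_eq', mem_univ, if_true, compl_eq_univ_sdiff]

lemma treeFlow_starGraph {v : Fin n} (hv : v ≠ s) :
    treeFlow d s (starGraph s) s(s, v) = d v := by
  simp [treeFlow, reachable_deleteEdges_starGraph_iff hv, filter_eq']

lemma quadCost_starGraph :
    quadCost C d s (starGraph s) = ∑ v ∈ {s}ᶜ, C s(s, v) * d v ^ 2 := by
  rw [quadCost, edgeFinset_starGraph, sum_image fun _ _ _ _ ↦ Sym2.congr_right.mp]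
  exact sum_congr rfl fun v hv ↦ by rw [treeFlow_starGraph (by simpa using hv)]

lemma mul_sq_sum_le_quadCost_of_neighborSet_eq_singleton (hC : ∀ e ∈ T.edgeSet, 0 ≤ C e)
    {u : Fin n} (hs : T.neighborSet s = {u}) :
    C s(s, u) * (∑ v ∈ {s}ᶜ, d v) ^ 2 ≤ quadCost C d s T := by
  have hsu : s(s, u) ∈ T.edgeFinset := mem_edgeFinset.mpr (hs ▸ Set.mem_singleton u :)
  rw [← treeFlow_of_neighborSet_eq_singleton hs]
  exact single_le_sum (f := fun e ↦ C e * treeFlow d s T e ^ 2)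
    (fun e he ↦ mul_nonneg (hC e (mem_edgeFinset.mp he)) (sq_nonneg _)) hsu

end QuadCost

/-- The edge costs of the counterexample: `2` for the edges incident with `s`, `1` for the others.
The sum form makes the total cost of a graph its number of edges plus the degree of `s`. -/
noncomputable def incidenceCost {V : Type*} [DecidableEq V] (s : V) (e : Sym2 V) : ℝ :=
  1 + if s ∈ e then 1 else 0

section IncidenceCost

variable {V : Type*} [DecidableEq V] {n : ℕ} {s : Fin n}

lemma incidenceCost_pos (s : V) (e : Sym2 V) : 0 < incidenceCost s e := by
  unfold incidenceCost
  positivity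

lemma incidenceCost_mk_left (s v : V) : incidenceCost s s(s, v) = 2 := by
  norm_num [incidenceCost]

lemma edgeCostSum_incidenceCost (T : SimpleGraph (Fin n)) [Fintype (T.neighborSet s)] :
    edgeCostSum (incidenceCost s) T = #T.edgeFinset + T.degree s := by
  simp only [edgeCostSum, incidenceCost, sum_add_distrib, sum_boole, ← incidenceFinset_eq_filter,
    card_incidenceFinset_eq_degree, sum_const, nsmul_eq_mul, mul_one]

lemma edgeCostSum_incidenceCost_lt_iff {T T' : SimpleGraph (Fin n)} [Fintype (T.neighborSet s)]
    [Fintype (T'.neighborSet s)] (hT : T.IsTree) (hT' : T'.IsTree) :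
    edgeCostSum (incidenceCost s) T < edgeCostSum (incidenceCost s) T' ↔
      T.degree s < T'.degree s := by
  have card_eq : #T.edgeFinset = #T'.edgeFinset :=
    Nat.succ_injective (hT.card_edgeFinset.trans hT'.card_edgeFinset.symm)
  rw [edgeCostSum_incidenceCost, edgeCostSum_incidenceCost, card_eq, add_lt_add_iff_left,
    Nat.cast_lt]

lemma quadCost_incidenceCost_starGraph_lt {T : SimpleGraph (Fin n)} {d : Fin n → ℝ} {u : Fin n}
    (hn : 3 ≤ n) (hs : T.neighborSet s = {u}) (hd : ∀ v, v ≠ s → 0 < d v) :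
    quadCost (incidenceCost s) d s (starGraph s) < quadCost (incidenceCost s) d s T := by
  have sinks_nontrivial : ({s}ᶜ : Finset (Fin n)).Nontrivial := by
    rw [← one_lt_card_iff_nontrivial, card_compl, card_singleton, Fintype.card_fin]
    lia
  calc quadCost (incidenceCost s) d s (starGraph s)
      = 2 * ∑ v ∈ {s}ᶜ, d v ^ 2 := by simp only [quadCost_starGraph, incidenceCost_mk_left, mul_sum]
    _ < 2 * (∑ v ∈ {s}ᶜ, d v) ^ 2 := by
        gcongr
        exact sum_sq_lt_sq_sum_of_pos sinks_nontrivial fun v hv ↦ hd v (by simpa using hv)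
    _ = incidenceCost s s(s, u) * (∑ v ∈ {s}ᶜ, d v) ^ 2 := by rw [incidenceCost_mk_left]
    _ ≤ quadCost (incidenceCost s) d s T :=
        mul_sq_sum_le_quadCost_of_neighborSet_eq_singleton
          (fun e _ ↦ (incidenceCost_pos s e).le) hs

end IncidenceCost

theorem mst_not_optimal_for_quadratic_cost_general {n : ℕ} (hn : 3 ≤ n) (s : Fin n) :
    ∃ (C : Sym2 (Fin n) → ℝ) (T₁ T₂ : SimpleGraph (Fin n)),
      (∀ e, 0 < C e) ∧ T₁.IsTree ∧ T₂.IsTree ∧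
      edgeCostSum C T₁ < edgeCostSum C T₂ ∧
      (∀ T : SimpleGraph (Fin n), T.IsTree → edgeCostSum C T₁ ≤ edgeCostSum C T) ∧
      ∀ d : Fin n → ℝ, (∀ v, v ≠ s → 0 < d v) → quadCost C d s T₂ < quadCost C d s T₁ := by
  have : Nontrivial (Fin n) := Fin.nontrivial_iff_two_le.mpr (by lia)
  obtain ⟨c, hcs⟩ := exists_ne s
  have leaf : (starGraph c).degree s = 1 := degree_starGraph_of_ne_center hcs.symm
  have center : (starGraph s).degree s = n - 1 :=
    degree_starGraph_center.trans (congrArg (· - 1) (Fintype.card_fin n))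
  refine ⟨incidenceCost s, starGraph c, starGraph s, incidenceCost_pos s, isTree_starGraph c,
    isTree_starGraph s, ?_, fun T hT ↦ ?_, fun d hd ↦
    quadCost_incidenceCost_starGraph_lt hn (neighborSet_starGraph_of_ne_center hcs.symm) hd⟩
  · rw [edgeCostSum_incidenceCost_lt_iff (isTree_starGraph c) (isTree_starGraph s), leaf,
      center]
    lia
  · rw [← not_lt, edgeCostSum_incidenceCost_lt_iff hT (isTree_starGraph c), leaf, not_lt]
    exact hT.connected.preconnected.degree_pos_of_nontrivial s

/-- There is a finite connected graph `G` with positive edge costs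
`C`, a source `s`, positive demands `d` on the other vertices, and spanning trees
`T₁, T₂` of `G` such that `T₁` has strictly smaller (indeed minimum) total edge cost,
yet the quadratic distribution cost of `T₂` is strictly smaller than that of `T₁`:
a minimum spanning tree need not be an optimal radial configuration. -/
theorem mst_not_optimal_for_quadratic_cost :
    ∃ (n : ℕ) (G : SimpleGraph (Fin n)) (C : Sym2 (Fin n) → ℝ) (s : Fin n)
      (d : Fin n → ℝ) (T₁ T₂ : SimpleGraph (Fin n)),
      G.Connected ∧
      (∀ e ∈ G.edgeSet, 0 < C e) ∧
      (∀ v : Fin n, v ≠ s → 0 < d v) ∧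
      T₁ ≤ G ∧ T₁.IsTree ∧ T₂ ≤ G ∧ T₂.IsTree ∧
      edgeCostSum C T₁ < edgeCostSum C T₂ ∧
      (∀ T : SimpleGraph (Fin n), T ≤ G → T.IsTree →
        edgeCostSum C T₁ ≤ edgeCostSum C T) ∧
      quadCost C d s T₂ < quadCost C d s T₁ := by
  obtain ⟨C, T₁, T₂, hC, hT₁, hT₂, hlt, hmin, hquad⟩ :=
    mst_not_optimal_for_quadratic_cost_general le_rfl (0 : Fin 3)
  exact ⟨3, ⊤, C, 0, 1, T₁, T₂, connected_top, fun e _ ↦ hC e, fun _ _ ↦ one_pos, le_top, hT₁,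
    le_top, hT₂, hlt, fun T _ hT ↦ hmin T hT, hquad 1 fun _ _ ↦ one_pos⟩
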